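/- Let τ and σ be operator means on P with σ strictly monotone in its second variable, and let τ₁, σ₁ : P × P → P with τ₁ jointly monotone. Assume AτB ≤ Aτ₁B and AσB ≤ Aσ₁B for all A, B ∈ P. Fix A, B ∈ P and let X₀, X₁ ∈ P satisfy X₀ = (X₀σA)τ(X₀σB) and X₁ = (X₁σ₁A)τ₁(X₁σ₁B). Then X₀ ≤ X₁ (monotonicity of the deformation in τ and σ). -/

import Mathlib

/-!
Put `f(X) = (XσA)τ(XσB)`. It is monotone, `X₀` is a fixed point of `f`, and the comparison
hypotheses together with monotonicity of `τ₁` give `f(X₁) ≤ X₁`.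

The map `f` is strictly subhomogeneous: for `t > 1`, homogeneity gives
`f(tX) = t ((Xσ(t⁻¹A)) τ (Xσ(t⁻¹B)))`, and strict monotonicity of `σ` makes `Xσ(t⁻¹A)` and
`Xσ(t⁻¹B)` at most `(1-ε)(XσA)` and `(1-ε)(XσB)` for one `ε > 0`, so that
`f(tX) ≤ t(1-ε) f(X)` (`exists_deformation_smul_le`).

Let `t ≥ 1` be least with `X₀ ≤ tX₁`. If `t > 1`, then
`X₀ = f(X₀) ≤ f(tX₁) ≤ t(1-ε) f(X₁) ≤ t(1-ε) X₁`, contradicting minimality. Hence `t = 1`.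
-/

open scoped ComplexOrder

variable {H : Type*} [NormedAddCommGroup H] [InnerProductSpace ℂ H] [CompleteSpace H]

/-- Membership in `P`, the cone of positive invertible bounded linear operators on `H`. -/
def PosInv (A : H →L[ℂ] H) : Prop := A.IsPositive ∧ IsUnit A

/-- The Loewner order: `A ≤ B` iff `B - A` is positive. -/
def Loe (A B : H →L[ℂ] H) : Prop := (B - A).IsPositive

/-- The strict order `A < B`, meaning `B - A ∈ P`. -/
def LoeLT (A B : H →L[ℂ] H) : Prop := PosInv (B - A)

/-- `A^{1/2}` via the continuous functional calculus. -/
noncomputable def opSqrt (A : H →L[ℂ] H) : H →L[ℂ] H := cfc Real.sqrt A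

/-- `A^{-1/2}` via the continuous functional calculus. -/
noncomputable def opInvSqrt (A : H →L[ℂ] H) : H →L[ℂ] H :=
  cfc (fun x : ℝ => (Real.sqrt x)⁻¹) A

/-- The Thompson metric `d_T(A,B) = ‖log (A^{-1/2} B A^{-1/2})‖`. -/
noncomputable def dT (A B : H →L[ℂ] H) : ℝ :=
  ‖cfc Real.log (opInvSqrt A * B * opInvSqrt A)‖

/-- The mean induced by a function `f`: `A σ_f B = A^{1/2} f(A^{-1/2} B A^{-1/2}) A^{1/2}`. -/
noncomputable def indMean (f : ℝ → ℝ) (A B : H →L[ℂ] H) : H →L[ℂ] H :=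
  opSqrt A * cfc f (opInvSqrt A * B * opInvSqrt A) * opSqrt A

/-- Convergence in the strong operator topology. -/
def SConv (A : ℕ → H →L[ℂ] H) (A0 : H →L[ℂ] H) : Prop :=
  ∀ x : H, Filter.Tendsto (fun k => A k x) Filter.atTop (nhds (A0 x))

/-- A Kubo–Ando operator mean on `P`: a binary operation satisfying (I) joint
monotonicity, (II) the transformer equality (together with positive homogeneity),
(III) downward continuity along nonincreasing strongly convergent sequences, and
(IV) normalization. -/
structure IsOperatorMean (m : (H →L[ℂ] H) → (H →L[ℂ] H) → (H →L[ℂ] H)) : Prop where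
  maps_P : ∀ A B, PosInv A → PosInv B → PosInv (m A B)
  mono : ∀ A A' B B', PosInv A → PosInv A' → PosInv B → PosInv B' →
    Loe A A' → Loe B B' → Loe (m A B) (m A' B')
  transformer : ∀ A B C, PosInv A → PosInv B → PosInv C →
    C * m A B * C = m (C * A * C) (C * B * C)
  homog : ∀ A B, PosInv A → PosInv B → ∀ r : ℝ, 0 < r → m (r • A) (r • B) = r • m A B
  downCont : ∀ (A B : ℕ → H →L[ℂ] H) (A0 B0 : H →L[ℂ] H),
    (∀ k, PosInv (A k)) → (∀ k, PosInv (B k)) → PosInv A0 → PosInv B0 →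
    (∀ k, Loe (A (k + 1)) (A k)) → (∀ k, Loe (B (k + 1)) (B k)) →
    SConv A A0 → SConv B B0 →
    (∀ k, Loe (m (A (k + 1)) (B (k + 1))) (m (A k) (B k))) ∧
      SConv (fun k => m (A k) (B k)) (m A0 B0)
  norm_one : m 1 1 = 1

/-- `σ` is strictly monotone in its second variable: `X ∈ P` and `A < B` imply `XσA < XσB`. -/
def StrictSecond (m : (H →L[ℂ] H) → (H →L[ℂ] H) → (H →L[ℂ] H)) : Prop :=
  ∀ X A B, PosInv X → PosInv A → PosInv B → LoeLT A B → LoeLT (m X A) (m X B)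

theorem loe_iff_le {A B : H →L[ℂ] H} : Loe A B ↔ A ≤ B := Iff.rfl

theorem PosInv.nonneg {A : H →L[ℂ] H} (hA : PosInv A) : 0 ≤ A :=
  ContinuousLinearMap.nonneg_iff_isPositive A |>.2 hA.1

theorem PosInv.smul {A : H →L[ℂ] H} (hA : PosInv A) {r : ℝ} (hr : 0 < r) : PosInv (r • A) :=
  ⟨(ContinuousLinearMap.nonneg_iff_isPositive _).1 (smul_nonneg hr.le hA.nonneg),
    hA.2.smul (Units.mk0 r hr.ne.symm)⟩

/-- Positive invertible operators are order units: they dominate a positive multiple of any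
given element of `P`. -/
theorem PosInv.exists_smul_le {D Y : H →L[ℂ] H} (hD : PosInv D) (hY : PosInv Y) :
    ∃ ε : ℝ, 0 < ε ∧ ε • Y ≤ D := by
  -- on the zero space every inequality holds; otherwise the spectral bound below applies
  rcases subsingleton_or_nontrivial (H →L[ℂ] H) with _ | _
  · exact ⟨1, one_pos, (Subsingleton.elim _ _).le⟩
  obtain ⟨c, hc, hcD⟩ : ∃ c : ℝ, 0 < c ∧ algebraMap ℝ (H →L[ℂ] H) c ≤ D := by
    have hs : IsStrictlyPositive D := hD.2.isStrictlyPositive hD.nonneg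
    exact (CFC.exists_pos_algebraMap_le_iff hs.isSelfAdjoint).2 fun x hx => hs.spectrum_pos hx
  have hYn : Y ≤ algebraMap ℝ (H →L[ℂ] H) ‖Y‖ :=
    IsSelfAdjoint.le_algebraMap_norm_self (IsSelfAdjoint.of_nonneg hY.nonneg)
  -- the `+ 1` makes the denominator visibly nonzero
  have hpos : 0 < ‖Y‖ + 1 := by positivity
  refine ⟨c / (‖Y‖ + 1), by positivity, ?_⟩
  calc (c / (‖Y‖ + 1)) • Y
      ≤ (c / (‖Y‖ + 1)) • algebraMap ℝ (H →L[ℂ] H) (‖Y‖ + 1) :=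
        smul_le_smul_of_nonneg_left
          (hYn.trans (algebraMap_mono _ (by linarith))) (by positivity)
    _ = algebraMap ℝ (H →L[ℂ] H) c := by
        rw [Algebra.smul_def, ← map_mul, div_mul_cancel₀ _ hpos.ne']
    _ ≤ D := hcD

theorem exists_mean_shrink_le {σ : (H →L[ℂ] H) → (H →L[ℂ] H) → (H →L[ℂ] H)}
    (hσ : IsOperatorMean σ) (hσstrict : StrictSecond σ) {X A : H →L[ℂ] H}
    (hX : PosInv X) (hA : PosInv A) {t : ℝ} (ht : 1 < t) :
    ∃ ε : ℝ, 0 < ε ∧ σ X (t⁻¹ • A) ≤ (1 - ε) • σ X A := by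
  have ht0 : 0 < t := by linarith
  have hA' : PosInv (t⁻¹ • A) := hA.smul (by positivity)
  have hlt : LoeLT (t⁻¹ • A) A := by
    have h := hA.smul (sub_pos.2 (inv_lt_one_of_one_lt₀ ht))
    rwa [sub_smul, one_smul] at h
  obtain ⟨ε, hε, h⟩ :=
    PosInv.exists_smul_le (hσstrict X _ A hX hA' hA hlt) (hσ.maps_P X A hX hA)
  refine ⟨ε, hε, ?_⟩
  rw [sub_smul, one_smul]
  exact le_sub_comm.1 h

/-- Strict subhomogeneity of `X ↦ (XσA)τ(XσB)`. -/
theorem exists_deformation_smul_le {τ σ : (H →L[ℂ] H) → (H →L[ℂ] H) → (H →L[ℂ] H)}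
    (hτ : IsOperatorMean τ) (hσ : IsOperatorMean σ) (hσstrict : StrictSecond σ)
    {X A B : H →L[ℂ] H} (hX : PosInv X) (hA : PosInv A) (hB : PosInv B)
    {t : ℝ} (ht : 1 < t) :
    ∃ q : ℝ, 0 < q ∧ q < 1 ∧
      τ (σ (t • X) A) (σ (t • X) B) ≤ (t * q) • τ (σ X A) (σ X B) := by
  have ht0 : 0 < t := by linarith
  obtain ⟨ε, hε, hεA⟩ := exists_mean_shrink_le hσ hσstrict hX hA ht
  obtain ⟨δ, hδ, hδB⟩ := exists_mean_shrink_le hσ hσstrict hX hB ht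
  have hMA := hσ.maps_P X A hX hA
  have hMB := hσ.maps_P X B hX hB
  have hNA : PosInv (σ X (t⁻¹ • A)) := hσ.maps_P X _ hX (hA.smul (by positivity))
  have hNB : PosInv (σ X (t⁻¹ • B)) := hσ.maps_P X _ hX (hB.smul (by positivity))
  -- one factor for both arguments; the `1 / 2` keeps it positive
  obtain ⟨q, hq0, hq1, hqε, hqδ⟩ : ∃ q : ℝ, 0 < q ∧ q < 1 ∧ 1 - ε ≤ q ∧ 1 - δ ≤ q :=
    ⟨max (1 / 2) (max (1 - ε) (1 - δ)), lt_max_of_lt_left (by norm_num),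
      max_lt (by norm_num) (max_lt (by linarith) (by linarith)),
      (le_max_left _ _).trans (le_max_right _ _), (le_max_right _ _).trans (le_max_right _ _)⟩
  have e : ∀ C : H →L[ℂ] H, PosInv C → σ (t • X) C = t • σ X (t⁻¹ • C) := by
    intro C hC
    rw [← hσ.homog X _ hX (hC.smul (by positivity)) t ht0, smul_inv_smul₀ ht0.ne']
  refine ⟨q, hq0, hq1, ?_⟩
  rw [e A hA, e B hB, hτ.homog _ _ hNA hNB t ht0, mul_smul, ← hτ.homog _ _ hMA hMB q hq0]
  refine smul_le_smul_of_nonneg_left ?_ ht0.le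
  exact hτ.mono _ _ _ _ hNA (hMA.smul hq0) hNB (hMB.smul hq0)
    (hεA.trans (smul_le_smul_of_nonneg_right hqε hMA.nonneg))
    (hδB.trans (smul_le_smul_of_nonneg_right hqδ hMB.nonneg))

/-- Monotonicity of the deformation in `τ` and `σ`: if `τ ≤ τ₁` and `σ ≤ σ₁`
pointwise on `P`, with `τ, σ` operator means, `σ` strictly monotone in its second
variable and `τ₁` jointly monotone, then the corresponding fixed points satisfy
`X₀ ≤ X₁`. -/
theorem deformed_mean_monotone_in_tau_sigma
    (τ σ τ₁ σ₁ : (H →L[ℂ] H) → (H →L[ℂ] H) → (H →L[ℂ] H))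
    (hτ : IsOperatorMean τ) (hσ : IsOperatorMean σ) (hσstrict : StrictSecond σ)
    (hτ₁maps : ∀ A B, PosInv A → PosInv B → PosInv (τ₁ A B))
    (hσ₁maps : ∀ A B, PosInv A → PosInv B → PosInv (σ₁ A B))
    (hτ₁mono : ∀ A A' B B', PosInv A → PosInv A' → PosInv B → PosInv B' →
      Loe A A' → Loe B B' → Loe (τ₁ A B) (τ₁ A' B'))
    (hττ₁ : ∀ A B, PosInv A → PosInv B → Loe (τ A B) (τ₁ A B))
    (hσσ₁ : ∀ A B, PosInv A → PosInv B → Loe (σ A B) (σ₁ A B))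
    (A B : H →L[ℂ] H) (hA : PosInv A) (hB : PosInv B)
    (X₀ X₁ : H →L[ℂ] H) (hX₀ : PosInv X₀) (hX₁ : PosInv X₁)
    (hfix₀ : X₀ = τ (σ X₀ A) (σ X₀ B)) (hfix₁ : X₁ = τ₁ (σ₁ X₁ A) (σ₁ X₁ B)) :
    Loe X₀ X₁ := by
  have hA₁ := hσ.maps_P X₁ A hX₁ hA
  have hB₁ := hσ.maps_P X₁ B hX₁ hB
  have hsuper : τ (σ X₁ A) (σ X₁ B) ≤ X₁ := by
    calc τ (σ X₁ A) (σ X₁ B) ≤ τ₁ (σ X₁ A) (σ X₁ B) := hττ₁ _ _ hA₁ hB₁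
      _ ≤ τ₁ (σ₁ X₁ A) (σ₁ X₁ B) :=
        hτ₁mono _ _ _ _ hA₁ (hσ₁maps _ _ hX₁ hA) hB₁ (hσ₁maps _ _ hX₁ hB)
          (hσσ₁ _ _ hX₁ hA) (hσσ₁ _ _ hX₁ hB)
      _ = X₁ := hfix₁.symm
  let S : Set ℝ := {t | 1 ≤ t ∧ X₀ ≤ t • X₁}
  have hSne : S.Nonempty := by
    obtain ⟨ε, hε, h⟩ := PosInv.exists_smul_le hX₁ hX₀
    refine ⟨max 1 ε⁻¹, le_max_left _ _, ?_⟩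
    calc X₀ = ε⁻¹ • ε • X₀ := (inv_smul_smul₀ hε.ne' _).symm
      _ ≤ ε⁻¹ • X₁ := smul_le_smul_of_nonneg_left h (by positivity)
      _ ≤ max 1 ε⁻¹ • X₁ := smul_le_smul_of_nonneg_right (le_max_right _ _) hX₁.nonneg
  have hSbdd : BddBelow S := ⟨1, fun t ht => ht.1⟩
  have hSclosed : IsClosed S := by
    have h1 : IsClosed {t : ℝ | 1 ≤ t} := isClosed_le continuous_const continuous_id
    have h2 : IsClosed {t : ℝ | X₀ ≤ t • X₁} := isClosed_le (by fun_prop) (by fun_prop)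
    exact h1.inter h2
  obtain ⟨ht1, htle⟩ : sInf S ∈ S := hSclosed.csInf_mem hSne hSbdd
  rcases ht1.eq_or_lt with h1 | h1
  · rwa [← h1, one_smul] at htle
  exfalso
  set t := sInf S with ht
  have ht0 : 0 < t := by linarith
  have htX : PosInv (t • X₁) := hX₁.smul ht0
  obtain ⟨q, hq0, hq1, hq⟩ := exists_deformation_smul_le hτ hσ hσstrict hX₁ hA hB h1
  have hX₀le : X₀ ≤ (t * q) • X₁ := by
    calc X₀ = τ (σ X₀ A) (σ X₀ B) := hfix₀
      _ ≤ τ (σ (t • X₁) A) (σ (t • X₁) B) :=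
        hτ.mono _ _ _ _ (hσ.maps_P _ _ hX₀ hA) (hσ.maps_P _ _ htX hA)
          (hσ.maps_P _ _ hX₀ hB) (hσ.maps_P _ _ htX hB)
          (hσ.mono _ _ _ _ hX₀ htX hA hA htle (loe_iff_le.2 le_rfl))
          (hσ.mono _ _ _ _ hX₀ htX hB hB htle (loe_iff_le.2 le_rfl))
      _ ≤ (t * q) • τ (σ X₁ A) (σ X₁ B) := hq
      _ ≤ (t * q) • X₁ := smul_le_smul_of_nonneg_left hsuper (by positivity)
  have hmem : max 1 (t * q) ∈ S :=
    ⟨le_max_left _ _,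
      hX₀le.trans (smul_le_smul_of_nonneg_right (le_max_right _ _) hX₁.nonneg)⟩
  exact absurd (csInf_le hSbdd hmem) (not_le.2 (max_lt h1 (by nlinarith)))
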